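/- Fix real numbers a < b and integers M ≥ 1; set h = (b−a)/M and grid points x_i = a + i·h for i = 0,…,M. Let φ : ℝ × ℝ × ℝⁿ × ℝ × ℝ → ℝⁿ satisfy ‖φ(t,x,y,τ,h) − φ(t,x,z,τ,h)‖_∞ ≤ L‖y − z‖_∞ for some L > 0 and all arguments, let τ > 0, t_k ∈ ℝ, and let d_i ∈ [a,b] for i = 0,…,M. If u_0,…,u_M and v_0,…,v_M are nodal values in ℝⁿ and one step of the semi-Lagrangian method is applied: u'_i = P[u](d_i) + τ·φ(t_k, d_i, P[u](d_i), τ, h) and v'_i = P[v](d_i) + τ·φ(t_k, d_i, P[v](d_i), τ, h), then for each i = 0,…,M, ‖u'_i − v'_i‖_∞ ≤ (1 + τL) · max_{0 ≤ j ≤ M} ‖u_j − v_j‖_∞. -/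

import Mathlib

/-- The piecewise linear interpolant of the nodal values `w 0, …, w M` on the
uniform grid `x i = a + i*h`: on `[x i, x (i+1)]` it equals
`w i + ((x - x i)/h) • (w (i+1) - w i)`. -/
noncomputable def plin (n : ℕ) (a h : ℝ) (M : ℕ) (w : ℕ → Fin n → ℝ) (x : ℝ) :
    Fin n → ℝ :=
  let i := min (M - 1) (Nat.floor ((x - a) / h))
  w i + ((x - (a + (i : ℝ) * h)) / h) • (w (i + 1) - w i)

/-- The local coordinate of a point of `[0, M]` in its grid cell lies in `[0, 1]`. -/
lemma sub_min_floor_mem_Icc {M : ℕ} (hM : 1 ≤ M) {s : ℝ} (hs : s ∈ Set.Icc (0 : ℝ) M) :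
    s - (min (M - 1) ⌊s⌋₊ : ℕ) ∈ Set.Icc (0 : ℝ) 1 := by
  have hfloor : (⌊s⌋₊ : ℝ) ≤ s := Nat.floor_le hs.1
  rcases le_total (M - 1) ⌊s⌋₊ with hle | hle
  · have hcast : ((M - 1 : ℕ) : ℝ) ≤ ⌊s⌋₊ := by exact_mod_cast hle
    rw [min_eq_left hle]
    refine ⟨by linarith, ?_⟩
    rw [Nat.cast_sub hM]
    push_cast
    linarith [hs.2]
  · rw [min_eq_right hle]
    exact ⟨by linarith, by linarith [Nat.lt_floor_add_one s]⟩

/-- Piecewise linear interpolation is nonexpansive for the maximum norm. -/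
lemma norm_plin_sub_plin_le {n M : ℕ} (hM : 1 ≤ M) {a b x C : ℝ} (hab : a < b)
    (hx : x ∈ Set.Icc a b) {u v : ℕ → Fin n → ℝ} (hC : ∀ j ≤ M, ‖u j - v j‖ ≤ C) :
    ‖plin n a ((b - a) / M) M u x - plin n a ((b - a) / M) M v x‖ ≤ C := by
  have hM' : (0 : ℝ) < M := by exact_mod_cast hM
  set h : ℝ := (b - a) / M with hh
  have hpos : 0 < h := div_pos (sub_pos.2 hab) hM'
  have hs : (x - a) / h ∈ Set.Icc (0 : ℝ) M := by
    refine ⟨div_nonneg (sub_nonneg.2 hx.1) hpos.le, ?_⟩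
    rw [div_le_iff₀ hpos, hh, mul_div_cancel₀ _ hM'.ne']
    linarith [hx.2]
  have hθ := sub_min_floor_mem_Icc hM hs
  simp only [plin]
  set i : ℕ := min (M - 1) ⌊(x - a) / h⌋₊ with hi
  have hiM : i + 1 ≤ M := by omega
  have hcoord : (x - (a + (i : ℝ) * h)) / h = (x - a) / h - i := by
    field_simp
    ring
  rw [hcoord]
  set θ : ℝ := (x - a) / h - i
  have hcomb : u i + θ • (u (i + 1) - u i) - (v i + θ • (v (i + 1) - v i))
      = (1 - θ) • (u i - v i) + θ • (u (i + 1) - v (i + 1)) := by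
    module
  rw [hcomb]
  have hmem : ∀ j ≤ M, u j - v j ∈ Metric.closedBall (0 : Fin n → ℝ) C := fun j hj => by
    simpa using hC j hj
  simpa using convex_closedBall (0 : Fin n → ℝ) C (hmem i (by omega)) (hmem (i + 1) hiM)
    (sub_nonneg.2 hθ.2) hθ.1 (sub_add_cancel 1 θ)

/-- Single-step contraction estimate from the stability proof of Theorem 3.5:
one step of the semi-Lagrangian method applied to two families of nodal values
(with the same departure points `d i ∈ [a,b]`) satisfies
`‖u'_i - v'_i‖_∞ ≤ (1 + τL) · max_j ‖u_j - v_j‖_∞`. -/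
theorem stmt_9 (n M : ℕ) (hM : 1 ≤ M)
    (a b L : ℝ) (hab : a < b) (hL : 0 < L)
    (φ : ℝ → ℝ → (Fin n → ℝ) → ℝ → ℝ → (Fin n → ℝ))
    (hφ : ∀ (t x : ℝ) (w w' : Fin n → ℝ) (τ' h' : ℝ),
      ‖φ t x w τ' h' - φ t x w' τ' h'‖ ≤ L * ‖w - w'‖)
    (τ : ℝ) (hτ : 0 < τ) (tk : ℝ)
    (d : ℕ → ℝ) (hd : ∀ i, i ≤ M → d i ∈ Set.Icc a b)
    (u v u' v' : ℕ → Fin n → ℝ)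
    (hu' : ∀ i, i ≤ M → u' i =
      plin n a ((b - a) / M) M u (d i)
        + τ • φ tk (d i) (plin n a ((b - a) / M) M u (d i)) τ ((b - a) / M))
    (hv' : ∀ i, i ≤ M → v' i =
      plin n a ((b - a) / M) M v (d i)
        + τ • φ tk (d i) (plin n a ((b - a) / M) M v (d i)) τ ((b - a) / M)) :
    ∀ i, i ≤ M →
      ‖u' i - v' i‖ ≤ (1 + τ * L) *
        (Finset.range (M + 1)).sup' Finset.nonempty_range_add_one
          (fun j => ‖u j - v j‖) := by
  intro i hi
  set C := (Finset.range (M + 1)).sup' Finset.nonempty_range_add_one (fun j => ‖u j - v j‖)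
  have hC : ∀ j ≤ M, ‖u j - v j‖ ≤ C := fun j hj =>
    Finset.le_sup' (fun j => ‖u j - v j‖) (Finset.mem_range.2 (Nat.lt_succ_of_le hj))
  have hP := norm_plin_sub_plin_le hM hab (hd i hi) hC
  rw [hu' i hi, hv' i hi, add_sub_add_comm, ← smul_sub]
  refine (norm_add_le _ _).trans ?_
  rw [norm_smul, Real.norm_of_nonneg hτ.le, one_add_mul, mul_assoc]
  gcongr
  exact (hφ _ _ _ _ _ _).trans (by gcongr)
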